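/- For every k ≥ 1 and every x ∈ S^k, the vectors b̂_1(x), ..., b̂_k(x) are tangent to S^k at x, pairwise orthogonal, and each has ℓ₂-norm 1 − x_0: ⟨b̂_i(x), x⟩ = 0 for all i, ⟨b̂_i(x), b̂_j(x)⟩ = 0 for all i ≠ j, and ‖b̂_i(x)‖₂ = 1 − x_0 for all i. Consequently, for every v ∈ ℝ^k, ‖Σ_{i=1}^k v_i b̂_i(x)‖₂ = (1 − x_0) ‖v‖₂. -/

import Mathlib

/-! Let `R` be the reflection in the hyperplane orthogonal to `x - e₀`. It exchanges the unit
vectors `x` and `e₀`, so it carries the orthonormal family `e₁, …, e_k`, which is orthogonal to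
`e₀`, to an orthonormal family orthogonal to `x`. Since `‖x - e₀‖² = 2 (1 - x₀)`, clearing the
denominator in the formula for `R` gives `b̂ᵢ(x) = (1 - x₀) • R eᵢ`. -/

open Finset

noncomputable section

/-- The ℓ₂-norm on `ℝⁿ`. -/
def l2 {n : ℕ} (x : Fin n → ℝ) : ℝ := Real.sqrt (∑ i, x i ^ 2)

/-- The standard inner product on `ℝⁿ`. -/
def dotp {n : ℕ} (x y : Fin n → ℝ) : ℝ := ∑ i, x i * y i

/-- The unit sphere `S^k` in `ℝ^{k+1}`. -/
def unitSphere (k : ℕ) : Set (Fin (k + 1) → ℝ) := {x | l2 x = 1}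

/-- The non-normalised tangent vector `b̂_i(x)`: `[b̂_i(x)]₀ = x_i (1 − x₀)`,
`[b̂_i(x)]_i = 1 − x₀ − x_i²`, and `[b̂_i(x)]_j = −x_j x_i` otherwise. -/
def tbhat {k : ℕ} (x : Fin (k + 1) → ℝ) (i : Fin k) : Fin (k + 1) → ℝ := fun j =>
  if j = 0 then x i.succ * (1 - x 0)
  else if j = i.succ then 1 - x 0 - (x i.succ) ^ 2
  else -(x j) * x i.succ

open WithLp Submodule
open scoped InnerProductSpace

theorem norm_sq_sum_smul_of_orthonormal {𝕜 E ι : Type*} [RCLike 𝕜] [SeminormedAddCommGroup E]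
    [InnerProductSpace 𝕜 E] {b : ι → E} (hb : Orthonormal 𝕜 b) (c : ι → 𝕜) (s : Finset ι) :
    ‖∑ i ∈ s, c i • b i‖ ^ 2 = ∑ i ∈ s, ‖c i‖ ^ 2 := by
  apply RCLike.ofReal_injective (K := 𝕜)
  push_cast
  rw [← inner_self_eq_norm_sq_to_K (𝕜 := 𝕜), hb.inner_sum]
  exact sum_congr rfl fun i _ => RCLike.conj_mul (c i)

theorem norm_sq_smul_reflection_orthogonal_span_singleton {𝕜 E : Type*} [RCLike 𝕜]
    [NormedAddCommGroup E] [InnerProductSpace 𝕜 E] (u z : E) :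
    (‖u‖ : 𝕜) ^ 2 • (𝕜 ∙ u)ᗮ.reflection z = (‖u‖ : 𝕜) ^ 2 • z - (2 * ⟪u, z⟫_𝕜) • u := by
  rcases eq_or_ne u 0 with rfl | hu
  · simp
  have hnorm : (‖u‖ : 𝕜) ^ 2 ≠ 0 := by simpa using hu
  rw [reflection_orthogonal_apply, reflection_singleton_apply, neg_sub, smul_sub,
    ← Nat.cast_smul_eq_nsmul 𝕜, smul_smul, smul_smul, Nat.cast_ofNat, mul_assoc, mul_left_comm,
    mul_div_cancel₀ _ hnorm]

theorem norm_sq_sub_inner_smul_reflection_sub {E : Type*} [NormedAddCommGroup E]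
    [InnerProductSpace ℝ E] {u w : E} (h : ‖u‖ = ‖w‖) (z : E) :
    (‖u‖ ^ 2 - ⟪u, w⟫_ℝ) • (ℝ ∙ (u - w))ᗮ.reflection z =
      (‖u‖ ^ 2 - ⟪u, w⟫_ℝ) • z - ⟪u - w, z⟫_ℝ • (u - w) := by
  have hnorm : ‖u - w‖ ^ 2 = 2 * (‖u‖ ^ 2 - ⟪u, w⟫_ℝ) := by
    rw [norm_sub_sq_real, ← h]
    ring
  have hreflection := norm_sq_smul_reflection_orthogonal_span_singleton (𝕜 := ℝ) (u - w) z
  rw [RCLike.ofReal_real_eq_id, id_eq, hnorm, mul_smul, mul_smul, mul_smul, ← smul_sub]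
    at hreflection
  exact smul_right_injective E two_ne_zero hreflection

theorem l2_eq_norm_toLp {n : ℕ} (x : Fin n → ℝ) : l2 x = ‖toLp 2 x‖ := by
  simp only [l2, EuclideanSpace.norm_eq, Real.norm_eq_abs, sq_abs]

theorem dotp_eq_inner_toLp {n : ℕ} (x y : Fin n → ℝ) : dotp x y = ⟪toLp 2 x, toLp 2 y⟫_ℝ := by
  simp only [dotp, PiLp.inner_apply, RCLike.inner_apply, conj_trivial, mul_comm]

theorem mem_unitSphere_iff_norm_toLp {k : ℕ} {x : Fin (k + 1) → ℝ} :
    x ∈ unitSphere k ↔ ‖toLp 2 x‖ = 1 := by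
  rw [← l2_eq_norm_toLp, unitSphere, Set.mem_ofPred_eq]

theorem apply_le_one_of_mem_unitSphere {k : ℕ} {x : Fin (k + 1) → ℝ} (hx : x ∈ unitSphere k)
    (i : Fin (k + 1)) : x i ≤ 1 :=
  calc
    x i ≤ ‖x i‖ := Real.le_norm_self _
    _ ≤ ‖toLp 2 x‖ := PiLp.norm_apply_le (toLp 2 x) i
    _ = 1 := mem_unitSphere_iff_norm_toLp.mp hx

section Frame

variable {k : ℕ} {x : Fin (k + 1) → ℝ}

/-- The reflection of `ℝ^{k+1}` exchanging a point `x` of the sphere with the pole `e₀`. At `x = e₀`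
the reflecting subspace is the whole space, and the reflection is the identity. -/
def poleReflection (x : Fin (k + 1) → ℝ) :
    EuclideanSpace ℝ (Fin (k + 1)) ≃ₗᵢ[ℝ] EuclideanSpace ℝ (Fin (k + 1)) :=
  (ℝ ∙ (toLp 2 x - EuclideanSpace.single 0 1))ᗮ.reflection

/-- The image of the basis `e₁, …, e_k` of the tangent space at the pole under `poleReflection x`.
On the sphere it is the normalisation of the `b̂ᵢ(x)` away from the pole, where they vanish. -/
def tangentFrame (x : Fin (k + 1) → ℝ) (i : Fin k) : EuclideanSpace ℝ (Fin (k + 1)) :=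
  poleReflection x (EuclideanSpace.single i.succ 1)

theorem orthonormal_tangentFrame (x : Fin (k + 1) → ℝ) : Orthonormal ℝ (tangentFrame x) :=
  (EuclideanSpace.orthonormal_single.comp Fin.succ (Fin.succ_injective k)).comp_linearIsometryEquiv
    (poleReflection x)

theorem norm_toLp_eq_norm_pole (hx : x ∈ unitSphere k) :
    ‖toLp 2 x‖ = ‖(EuclideanSpace.single 0 1 : EuclideanSpace ℝ (Fin (k + 1)))‖ := by
  rw [mem_unitSphere_iff_norm_toLp.mp hx, PiLp.norm_single, norm_one]

theorem poleReflection_apply_self (hx : x ∈ unitSphere k) :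
    poleReflection x (toLp 2 x) = EuclideanSpace.single 0 1 :=
  reflection_sub (norm_toLp_eq_norm_pole hx)

theorem poleReflection_apply_pole (hx : x ∈ unitSphere k) :
    poleReflection x (EuclideanSpace.single 0 1) = toLp 2 x := by
  rw [← poleReflection_apply_self hx]
  exact reflection_reflection _ _

theorem inner_tangentFrame_self (hx : x ∈ unitSphere k) (i : Fin k) :
    ⟪tangentFrame x i, toLp 2 x⟫_ℝ = 0 := by
  rw [← poleReflection_apply_pole hx, tangentFrame, LinearIsometryEquiv.inner_map_map]
  exact EuclideanSpace.orthonormal_single.inner_eq_zero (Fin.succ_ne_zero i)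

theorem toLp_tbhat_eq_smul_sub (x : Fin (k + 1) → ℝ) (i : Fin k) :
    toLp 2 (tbhat x i) = (1 - x 0) • EuclideanSpace.single i.succ (1 : ℝ) -
      x i.succ • (toLp 2 x - EuclideanSpace.single 0 1) := by
  ext j
  rcases Fin.eq_zero_or_eq_succ j with rfl | ⟨j, rfl⟩
  · simp only [tbhat, ↓reduceIte, PiLp.sub_apply, PiLp.smul_apply, PiLp.single_apply,
      (Fin.succ_ne_zero i).symm, smul_eq_mul]
    ring
  · simp only [tbhat, ↓reduceIte, PiLp.sub_apply, PiLp.smul_apply, PiLp.single_apply,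
      Fin.succ_ne_zero, Fin.succ_inj, smul_eq_mul]
    split_ifs with hij
    · rw [hij]
      ring
    · ring

theorem toLp_tbhat_eq_smul_tangentFrame (hx : x ∈ unitSphere k) (i : Fin k) :
    toLp 2 (tbhat x i) = (1 - x 0) • tangentFrame x i := by
  have hheight : ⟪toLp 2 x, EuclideanSpace.single 0 1⟫_ℝ = x 0 := by
    simp [EuclideanSpace.inner_single_right]
  have hcoord : ⟪toLp 2 x - EuclideanSpace.single 0 1, EuclideanSpace.single i.succ 1⟫_ℝ =
      x i.succ := by
    simp [EuclideanSpace.inner_single_right]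
  have hreflection := norm_sq_sub_inner_smul_reflection_sub (norm_toLp_eq_norm_pole hx)
    (EuclideanSpace.single i.succ 1)
  rw [mem_unitSphere_iff_norm_toLp.mp hx, one_pow, hheight, hcoord] at hreflection
  rw [toLp_tbhat_eq_smul_sub, tangentFrame, poleReflection, hreflection]

theorem norm_sum_smul_tangentFrame (x : Fin (k + 1) → ℝ) (v : Fin k → ℝ) :
    ‖∑ i, v i • tangentFrame x i‖ = l2 v := by
  rw [l2, ← Real.sqrt_sq (norm_nonneg (∑ i, v i • tangentFrame x i)),
    norm_sq_sum_smul_of_orthonormal (orthonormal_tangentFrame x)]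
  simp only [Real.norm_eq_abs, sq_abs]

end Frame

/-- For `x ∈ S^k`, the `b̂ᵢ(x)` are tangent at `x`, pairwise orthogonal, each of
ℓ₂-norm `1 − x₀`; consequently `‖Σᵢ vᵢ b̂ᵢ(x)‖₂ = (1 − x₀) ‖v‖₂` for every `v ∈ ℝ^k`. -/
theorem tbhat_orthogonal (k : ℕ) (hk : 1 ≤ k)
    (x : Fin (k + 1) → ℝ) (hx : x ∈ unitSphere k) :
    (∀ i : Fin k, dotp (tbhat x i) x = 0) ∧
    (∀ i j : Fin k, i ≠ j → dotp (tbhat x i) (tbhat x j) = 0) ∧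
    (∀ i : Fin k, l2 (tbhat x i) = 1 - x 0) ∧
    (∀ v : Fin k → ℝ, l2 (∑ i : Fin k, v i • tbhat x i) = (1 - x 0) * l2 v) := by
  have hscale : 0 ≤ 1 - x 0 := sub_nonneg.mpr (apply_le_one_of_mem_unitSphere hx 0)
  have htbhat := toLp_tbhat_eq_smul_tangentFrame hx
  refine ⟨fun i => ?tangent, fun i j hij => ?orthogonal, fun i => ?norm, fun v => ?norm_sum⟩
  case tangent =>
    rw [dotp_eq_inner_toLp, htbhat, real_inner_smul_left, inner_tangentFrame_self hx, mul_zero]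
  case orthogonal =>
    rw [dotp_eq_inner_toLp, htbhat, htbhat, real_inner_smul_left, real_inner_smul_right,
      (orthonormal_tangentFrame x).inner_eq_zero hij, mul_zero, mul_zero]
  case norm =>
    rw [l2_eq_norm_toLp, htbhat, norm_smul_of_nonneg hscale,
      (orthonormal_tangentFrame x).norm_eq_one, mul_one]
  case norm_sum =>
    have hsum : toLp 2 (∑ i, v i • tbhat x i) = (1 - x 0) • ∑ i, v i • tangentFrame x i := by
      simp only [toLp_sum, toLp_smul, htbhat, smul_sum, smul_comm (v _)]
    rw [l2_eq_norm_toLp, hsum, norm_smul_of_nonneg hscale, norm_sum_smul_tangentFrame]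

end
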